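/- arXiv:2312.09157 — 3 statements merged into one kernel-verified Lean document; each statement's English description precedes it below -/
import Mathlib

section
/- Let d ≥ 1, n = d(d+1)/2, and let τ be a partition of n with τ₁ ≤ n − 2d. Then the dimension vector v_𝛕 associated to the triple 𝛕 = (ξ_d, ξ_d, τ) is a fundamental imaginary root of the star-shaped graph Γ_𝛕, i.e. v_𝛕 ∈ M. -/
/-!
Star-shaped graph with three legs of lengths `r 0`, `r 1`, `r 2`.
The vertex `none` is the central vertex `0`, and `some ⟨i, j⟩` is the
vertex `[i, j+1]` on the `i`-th leg.
-/

/-- Vertex set `I` of the star-shaped graph. -/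
abbrev StarVertex (r : Fin 3 → ℕ) := Option ((i : Fin 3) × Fin (r i))

/-- The entry `(e_u, e_w)` of the Cartan matrix of the star-shaped graph:
`2` on the diagonal, `-1` for adjacent vertices, `0` otherwise. -/
def cartan {r : Fin 3 → ℕ} : StarVertex r → StarVertex r → ℤ
  | none, none => 2
  | none, some p => if p.2.val = 0 then -1 else 0
  | some p, none => if p.2.val = 0 then -1 else 0
  | some p, some q =>
      if p.1 = q.1 then
        (if p.2.val = q.2.val then 2
         else if p.2.val + 1 = q.2.val ∨ q.2.val + 1 = p.2.val then -1 else 0)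
      else 0

/-- The pairing `(e_u, v)` of a basis vector `e_u` with `v ∈ ℤ^I`. -/
def pairing {r : Fin 3 → ℕ} (u : StarVertex r) (v : StarVertex r → ℤ) : ℤ :=
  ∑ w : StarVertex r, cartan u w * v w

/-- The fundamental reflection `s_u(v) = v - (v, e_u) e_u`. -/
def reflAt {r : Fin 3 → ℕ} (u : StarVertex r) (v : StarVertex r → ℤ) :
    StarVertex r → ℤ :=
  fun w => if w = u then v w - pairing u v else v w

/-- One direction of the edge relation of the star-shaped graph. -/
def legRel {r : Fin 3 → ℕ} : StarVertex r → StarVertex r → Prop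
  | none, some p => p.2.val = 0
  | some p, some q => p.1 = q.1 ∧ p.2.val + 1 = q.2.val
  | _, _ => False

/-- The star-shaped graph as a simple graph. -/
def starGraph (r : Fin 3 → ℕ) : SimpleGraph (StarVertex r) :=
  SimpleGraph.fromRel legRel

/-- `v ∈ M`: `v` is a fundamental imaginary root, i.e. `v ≠ 0`, the support of `v`
induces a connected subgraph, and `(e_u, v) ≤ 0` for every vertex `u`. -/
def IsFundImaginary {r : Fin 3 → ℕ} (v : StarVertex r → ℤ) : Prop :=
  v ≠ 0 ∧ (SimpleGraph.induce {u | v u ≠ 0} (starGraph r)).Connected ∧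
    ∀ u : StarVertex r, pairing u v ≤ 0

/-- `y` lies in the Weyl-group orbit of `x` (every element of `W` is a word in the
fundamental reflections, which are involutions). -/
def InWOrbit {r : Fin 3 → ℕ} (x y : StarVertex r → ℤ) : Prop :=
  ∃ l : List (StarVertex r), y = l.foldr reflAt x

/-- `y` lies in the orbit of `x` under the subgroup `H ≤ W` generated by the
reflections at the non-central vertices. -/
def InHOrbit {r : Fin 3 → ℕ} (x y : StarVertex r → ℤ) : Prop :=
  ∃ l : List ((i : Fin 3) × Fin (r i)), y = l.foldr (fun p => reflAt (some p)) x

/-- The coordinates of `v` read along the `i`-th leg: `coord v i 0 = v₀` is the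
central coordinate, `coord v i j = v_{[i,j]}` for `1 ≤ j ≤ r i`, and `0` beyond. -/
def coord {r : Fin 3 → ℕ} (v : StarVertex r → ℤ) (i : Fin 3) : ℕ → ℤ
  | 0 => v none
  | j + 1 => if h : j < r i then v (some ⟨i, ⟨j, h⟩⟩) else 0

/-- `δ(v) = v₀ - ∑_{i=1}^{3} (v₀ - v_{[i,1]})`. -/
def deltaInv {r : Fin 3 → ℕ} (v : StarVertex r → ℤ) : ℤ :=
  v none - ∑ i : Fin 3, (v none - coord v i 1)

/-- `v ∈ (ℕ^I)*`: the coordinates of `v` are nonnegative and non-increasing along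
each leg: `v₀ ≥ v_{[i,1]} ≥ ⋯ ≥ v_{[i,r_i]} ≥ 0`. -/
def InNStar {r : Fin 3 → ℕ} (v : StarVertex r → ℤ) : Prop :=
  ∀ (i : Fin 3) (j : ℕ), coord v i (j + 1) ≤ coord v i j

/-- The sequence `σ^i(v) = (v₀ - v_{[i,1]}, …, v_{[i,r_i-1]} - v_{[i,r_i]}, v_{[i,r_i]})`
of successive differences along the `i`-th leg (its entries are
`sigmaSeq v i 0, …, sigmaSeq v i (r i)`; it vanishes beyond). -/
def sigmaSeq {r : Fin 3 → ℕ} (v : StarVertex r → ℤ) (i : Fin 3) (j : ℕ) : ℤ :=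
  coord v i j - coord v i (j + 1)

/-- `v ∈ (ℕ^I)**`: `v ∈ (ℕ^I)*` and each `σ^i(v)` is non-increasing, i.e. `v = v_𝛍`
for a triple of partitions `𝛍`. -/
def InNStarStar {r : Fin 3 → ℕ} (v : StarVertex r → ℤ) : Prop :=
  InNStar v ∧ ∀ (i : Fin 3) (j : ℕ), sigmaSeq v i (j + 1) ≤ sigmaSeq v i j

/-- A partition of `n`: a non-increasing sequence `parts 0 ≥ parts 1 ≥ ⋯`
(`parts j` is the `(j+1)`-th part) with exactly `len` nonzero parts summing to `n`. -/
structure PartitionOf (n : ℕ) where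
  parts : ℕ → ℕ
  antitone : ∀ j : ℕ, parts (j + 1) ≤ parts j
  len : ℕ
  pos_of_lt : ∀ j < len, 0 < parts j
  zero_of_le : ∀ j : ℕ, len ≤ j → parts j = 0
  sum_parts : ∑ j ∈ Finset.range len, parts j = n

/-- The dimension vector `v_𝛍` of a triple of partitions of `n` whose parts are given
by `p 0, p 1, p 2`: coordinate `n` at the central vertex, and
`n - (μ^i_1 + ⋯ + μ^i_j)` at the vertex `[i, j]`. -/
def dimVec (r : Fin 3 → ℕ) (n : ℕ) (p : Fin 3 → ℕ → ℕ) : StarVertex r → ℤ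
  | none => (n : ℤ)
  | some q => (n : ℤ) - ∑ s ∈ Finset.range (q.2.val + 1), (p q.1 s : ℤ)

/-!
Along each leg, `(e_u, v)` at a non-central vertex is minus a second difference of the coordinates
of `v`, i.e. a difference of consecutive entries of `σ^i(v)`, while at the centre it is `-δ(v)`.
Hence a nonzero `v ∈ (ℕ^I)**` lies in `M` as soon as `δ(v) ≥ 0`; its support is connected because
it is the centre together with an initial segment of each leg. For `v = v_𝛍` the sequences
`σ^i(v)` are the partitions `μ^i` themselves and `δ(v) = n - (μ¹₁ + μ²₁ + μ³₁)`, which for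
`(ξ_d, ξ_d, τ)` equals `n - 2d - τ₁`.
-/

section StarGraph

variable {r : Fin 3 → ℕ} {v : StarVertex r → ℤ}

lemma coord_fin_succ (v : StarVertex r → ℤ) (i : Fin 3) (j : Fin (r i)) :
    coord v i (j + 1) = v (some ⟨i, j⟩) := by
  simp only [coord, j.isLt, dite_true]

lemma coord_eq_zero_of_lt (v : StarVertex r → ℤ) {i : Fin 3} {j : ℕ} (hj : r i < j) :
    coord v i j = 0 := by
  obtain ⟨j, rfl⟩ := Nat.exists_eq_succ_of_ne_zero (Nat.ne_zero_of_lt hj)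
  exact dif_neg (by omega)

lemma sum_leg_ite_eq_coord_succ (v : StarVertex r → ℤ) (i : Fin 3) (a : ℕ) :
    ∑ k : Fin (r i), (if k.val = a then v (some ⟨i, k⟩) else 0) = coord v i (a + 1) := by
  by_cases ha : a < r i
  · rw [Finset.sum_eq_single_of_mem ⟨a, ha⟩ (Finset.mem_univ _)
      fun k _ hk => if_neg (Fin.val_ne_of_ne hk), if_pos rfl]
    exact (coord_fin_succ v i ⟨a, ha⟩).symm
  · rw [coord_eq_zero_of_lt v (by omega)]
    exact Finset.sum_eq_zero fun k _ => if_neg (by omega)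

lemma pairing_none (v : StarVertex r → ℤ) : pairing none v = -deltaInv v := by
  have leg_sum (i : Fin 3) :
      ∑ k : Fin (r i), cartan none (some ⟨i, k⟩) * v (some ⟨i, k⟩) = -coord v i 1 := by
    simp only [cartan, ite_mul, neg_one_mul, zero_mul, ← sum_leg_ite_eq_coord_succ v i 0,
      ← Finset.sum_neg_distrib, neg_ite, neg_zero]
  simp only [pairing, Fintype.sum_option, Fintype.sum_sigma, leg_sum, Fin.sum_univ_three, deltaInv]
  simp only [cartan]
  ring

lemma sum_own_leg_cartan (v : StarVertex r → ℤ) (i : Fin 3) (j : Fin (r i)) :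
    cartan (some ⟨i, j⟩) none * v none +
        ∑ k : Fin (r i), cartan (some ⟨i, j⟩) (some ⟨i, k⟩) * v (some ⟨i, k⟩) =
      2 * coord v i (j + 1) - coord v i j - coord v i (j + 2) := by
  obtain ⟨j, hj⟩ := j
  have cartan_row (k : Fin (r i)) :
      cartan (some ⟨i, ⟨j, hj⟩⟩) (some ⟨i, k⟩) * v (some ⟨i, k⟩) =
        2 * (if k.val = j then v (some ⟨i, k⟩) else 0) -
          (if k.val = j + 1 then v (some ⟨i, k⟩) else 0) -
          (if k.val + 1 = j then v (some ⟨i, k⟩) else 0) := by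
    simp only [cartan, if_true]
    split_ifs <;> omega
  simp only [cartan_row, Finset.sum_sub_distrib, ← Finset.mul_sum, sum_leg_ite_eq_coord_succ]
  cases j with
  | zero =>
    simp only [cartan, if_true, coord, Nat.succ_ne_zero, if_false, Finset.sum_const_zero]
    ring
  | succ j =>
    simp only [cartan, Nat.succ_ne_zero, if_false, Nat.add_right_cancel_iff,
      sum_leg_ite_eq_coord_succ]
    ring

lemma pairing_some (v : StarVertex r → ℤ) (i : Fin 3) (j : Fin (r i)) :
    pairing (some ⟨i, j⟩) v = sigmaSeq v i (j + 1) - sigmaSeq v i j := by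
  have other_leg (i' : Fin 3) (hi' : i' ≠ i) :
      ∑ k : Fin (r i'), cartan (some ⟨i, j⟩) (some ⟨i', k⟩) * v (some ⟨i', k⟩) = 0 := by
    simp [cartan, hi'.symm]
  calc pairing (some ⟨i, j⟩) v
      = cartan (some ⟨i, j⟩) none * v none +
          ∑ k : Fin (r i), cartan (some ⟨i, j⟩) (some ⟨i, k⟩) * v (some ⟨i, k⟩) := by
        rw [pairing, Fintype.sum_option, Fintype.sum_sigma, Fintype.sum_eq_single i other_leg]
    _ = 2 * coord v i (j + 1) - coord v i j - coord v i (j + 2) := sum_own_leg_cartan v i j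
    _ = sigmaSeq v i (j + 1) - sigmaSeq v i j := by
        simp only [sigmaSeq]
        ring

lemma starGraph_adj_none_some {i : Fin 3} (h : 0 < r i) :
    (starGraph r).Adj none (some ⟨i, ⟨0, h⟩⟩) := by
  simp [starGraph, legRel]

lemma starGraph_adj_some_succ {i : Fin 3} {j : ℕ} (h : j + 1 < r i) :
    (starGraph r).Adj (some ⟨i, ⟨j, j.lt_succ_self.trans h⟩⟩) (some ⟨i, ⟨j + 1, h⟩⟩) := by
  simp [starGraph, legRel]

namespace InNStar

lemma coord_antitone (hv : InNStar v) (i : Fin 3) : Antitone (coord v i) :=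
  antitone_nat_of_succ_le (hv i)

lemma coord_nonneg (hv : InNStar v) (i : Fin 3) (j : ℕ) : 0 ≤ coord v i j := by
  rcases le_or_gt j (r i) with hj | hj
  · exact (coord_eq_zero_of_lt v (Nat.lt_succ_self _)).ge.trans
      (hv.coord_antitone i (hj.trans (Nat.le_succ _)))
  · exact (coord_eq_zero_of_lt v hj).ge

lemma apply_none_ne_zero (hv : InNStar v) (h0 : v ≠ 0) : v none ≠ 0 := by
  refine fun hnone => h0 (funext fun u => ?_)
  rcases u with _ | ⟨i, j⟩
  · exact hnone
  · rw [← coord_fin_succ v i j]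
    exact ((hv.coord_antitone i (Nat.zero_le _)).trans hnone.le).antisymm (hv.coord_nonneg i _)

lemma reachable_none_some (hv : InNStar v) (hnone : v none ≠ 0) (i : Fin 3) :
    ∀ (j : ℕ) (hj : j < r i) (hne : v (some ⟨i, ⟨j, hj⟩⟩) ≠ 0),
      ((starGraph r).induce {u | v u ≠ 0}).Reachable ⟨none, hnone⟩ ⟨some ⟨i, ⟨j, hj⟩⟩, hne⟩
  | 0, hj, _ =>
    SimpleGraph.Adj.reachable (SimpleGraph.induce_adj.mpr (starGraph_adj_none_some hj))
  | j + 1, hj, hne => by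
    have hj' : j < r i := j.lt_succ_self.trans hj
    have hpos : 0 < coord v i (j + 2) := (hv.coord_nonneg i (j + 2)).lt_of_ne'
      ((coord_fin_succ v i ⟨j + 1, hj⟩).trans_ne hne)
    have hne' : v (some ⟨i, ⟨j, hj'⟩⟩) ≠ 0 :=
      (coord_fin_succ v i ⟨j, hj'⟩).symm.trans_ne (hpos.trans_le (hv i (j + 1))).ne'
    exact (reachable_none_some hv hnone i j hj' hne').trans
      (SimpleGraph.Adj.reachable (SimpleGraph.induce_adj.mpr (starGraph_adj_some_succ hj)))

lemma connected_induce_support (hv : InNStar v) (h0 : v ≠ 0) :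
    ((starGraph r).induce {u | v u ≠ 0}).Connected := by
  have hnone := hv.apply_none_ne_zero h0
  refine (SimpleGraph.connected_iff_exists_forall_reachable _).mpr ⟨⟨none, hnone⟩, ?_⟩
  rintro ⟨_ | ⟨i, j, hj⟩, hne⟩
  · rfl
  · exact hv.reachable_none_some hnone i j hj hne

end InNStar

theorem InNStarStar.isFundImaginary (hv : InNStarStar v) (h0 : v ≠ 0) (hδ : 0 ≤ deltaInv v) :
    IsFundImaginary v := by
  refine ⟨h0, hv.1.connected_induce_support h0, ?_⟩
  rintro (_ | ⟨i, j⟩)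
  · rw [pairing_none]
    exact neg_nonpos.mpr hδ
  · rw [pairing_some]
    exact sub_nonpos.mpr (hv.2 i j)

end StarGraph

namespace PartitionOf

lemma sum_range_of_len_le {n : ℕ} (P : PartitionOf n) {j : ℕ} (hj : P.len ≤ j) :
    ∑ s ∈ Finset.range j, P.parts s = n := by
  refine (Finset.sum_subset (Finset.range_mono hj) fun s _ hs =>
    P.zero_of_le s ?_).symm.trans P.sum_parts
  simpa only [Finset.mem_range, not_lt] using hs

/-- The staircase partition `ξ_d = (d, d - 1, …, 1)` of `d * (d + 1) / 2`, its zero parts coming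
from truncated subtraction. -/
def staircase (d : ℕ) : PartitionOf (d * (d + 1) / 2) where
  parts s := d - s
  antitone j := by omega
  len := d
  pos_of_lt j hj := by omega
  zero_of_le j hj := by omega
  sum_parts := calc
    ∑ s ∈ Finset.range d, (d - s) = ∑ s ∈ Finset.range (d + 1), (d - s) := by
      rw [Finset.sum_range_succ, Nat.sub_self, add_zero]
    _ = ∑ s ∈ Finset.range (d + 1), s := Finset.sum_range_reflect id (d + 1)
    _ = d * (d + 1) / 2 := by rw [Finset.sum_range_id, Nat.add_sub_cancel, mul_comm]

end PartitionOf

section DimVec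

variable {n : ℕ} {r : Fin 3 → ℕ} {P : Fin 3 → PartitionOf n}

lemma coord_dimVec (hr : ∀ i, (P i).len ≤ r i + 1) (i : Fin 3) (j : ℕ) :
    coord (dimVec r n fun i => (P i).parts) i j =
      n - ∑ s ∈ Finset.range j, ((P i).parts s : ℤ) := by
  rcases j with _ | j
  · simp [coord, dimVec]
  · by_cases hj : j < r i
    · simp only [coord, hj, dite_true, dimVec]
    · rw [coord_eq_zero_of_lt _ (by omega), ← Nat.cast_sum,
        (P i).sum_range_of_len_le ((hr i).trans (by omega)), sub_self]

lemma sigmaSeq_dimVec (hr : ∀ i, (P i).len ≤ r i + 1) (i : Fin 3) (j : ℕ) :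
    sigmaSeq (dimVec r n fun i => (P i).parts) i j = (P i).parts j := by
  rw [sigmaSeq, coord_dimVec hr, coord_dimVec hr, Finset.sum_range_succ]
  ring

lemma deltaInv_dimVec (hr : ∀ i, (P i).len ≤ r i + 1) :
    deltaInv (dimVec r n fun i => (P i).parts) = n - ∑ i, ((P i).parts 0 : ℤ) := by
  simp only [deltaInv, ← sigmaSeq_dimVec hr]
  rfl

lemma inNStarStar_dimVec (hr : ∀ i, (P i).len ≤ r i + 1) :
    InNStarStar (dimVec r n fun i => (P i).parts) := by
  refine ⟨fun i j => sub_nonneg.mp ?_, fun i j => ?_⟩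
  · exact (Int.natCast_nonneg _).trans_eq (sigmaSeq_dimVec hr i j).symm
  · rw [sigmaSeq_dimVec hr, sigmaSeq_dimVec hr]
    exact_mod_cast (P i).antitone j

theorem isFundImaginary_dimVec (hr : ∀ i, (P i).len ≤ r i + 1) (hn : n ≠ 0)
    (hP : ∑ i, (P i).parts 0 ≤ n) : IsFundImaginary (dimVec r n fun i => (P i).parts) := by
  refine (inNStarStar_dimVec hr).isFundImaginary
    (fun h0 => hn (Int.natCast_eq_zero.mp (congrFun h0 none))) ?_
  rw [deltaInv_dimVec hr, sub_nonneg]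
  exact_mod_cast hP

end DimVec

/-- If `τ₁ ≤ n - 2d` then the dimension vector of `(ξ_d, ξ_d, τ)` is a fundamental
imaginary root of the star-shaped graph `Γ_𝛕` with legs of lengths
`d - 1, d - 1, ℓ(τ) - 1`. -/
theorem staircase_dimVec_fundamental_imaginary (d : ℕ) (hd : 1 ≤ d) (n : ℕ)
    (hn : n = d * (d + 1) / 2) (τ : PartitionOf n)
    (hτ : (τ.parts 0 : ℤ) ≤ (n : ℤ) - 2 * d) :
    IsFundImaginary
      (dimVec ![d - 1, d - 1, τ.len - 1] n
        ![fun s => d - s, fun s => d - s, τ.parts]) := by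
  subst hn
  let P : Fin 3 → PartitionOf (d * (d + 1) / 2) := ![.staircase d, .staircase d, τ]
  have hparts : ![fun s => d - s, fun s => d - s, τ.parts] = fun i => (P i).parts := by
    funext i
    fin_cases i <;> rfl
  have hlen (i : Fin 3) : (P i).len ≤ ![d - 1, d - 1, τ.len - 1] i + 1 := by
    fin_cases i <;> exact le_tsub_add
  have hsize : d * (d + 1) / 2 ≠ 0 := (Nat.div_pos (by nlinarith) two_pos).ne'
  have hfirst : ∑ i, (P i).parts 0 ≤ d * (d + 1) / 2 := by
    have : ∑ i, (P i).parts 0 = d + d + τ.parts 0 := Fin.sum_univ_three _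
    omega
  rw [hparts]
  exact isFundImaginary_dimVec hlen hsize hfirst
end

section
/- Let m ≥ 1 and let μ be a partition of 2m with μ ⊴ (m, m) (equivalently μ₁ ≤ m). Then there exists a partition λ of 2m − 2 with λ ⊴ (m−1, m−1) such that μ is obtained from λ by adding two boxes, no two in the same row; that is, λ_i ≤ μ_i ≤ λ_i + 1 for all i. -/
/-!
Let `μ` be a partition of `k * m` with `μ₁ ≤ m`. Counting boxes, `μ` has at least `k` rows, and at
most `k` of them have length `m`. Remove the last box of each row of length `m`, and of as many
rows at the bottom as needed to remove `k` boxes in all. The rows remain non-increasing because the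
row following the block of longest rows is strictly shorter, and the longest rows now have length
`m - 1`.
-/

namespace PartitionOf

variable {n : ℕ}

theorem parts_antitone (μ : PartitionOf n) : Antitone μ.parts :=
  antitone_nat_of_succ_le μ.antitone

theorem lt_len_of_parts_pos (μ : PartitionOf n) {i : ℕ} (hi : 0 < μ.parts i) : i < μ.len := by
  contrapose! hi
  exact (μ.zero_of_le i hi).le

theorem le_len_mul_parts_zero (μ : PartitionOf n) : n ≤ μ.len * μ.parts 0 := by
  have h := Finset.sum_le_card_nsmul (Finset.range μ.len) μ.parts (μ.parts 0)
    fun i _ => μ.parts_antitone i.zero_le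
  rwa [μ.sum_parts, Finset.card_range, smul_eq_mul] at h

theorem succ_mul_parts_le (μ : PartitionOf n) (i : ℕ) : (i + 1) * μ.parts i ≤ n := by
  rcases (μ.parts i).eq_zero_or_pos with hzero | hpos
  · simp [hzero]
  calc (i + 1) * μ.parts i
      = ∑ _j ∈ Finset.range (i + 1), μ.parts i := by simp
    _ ≤ ∑ j ∈ Finset.range (i + 1), μ.parts j :=
      Finset.sum_le_sum fun j hj =>
        μ.parts_antitone (Nat.le_of_lt_succ (Finset.mem_range.mp hj))
    _ ≤ ∑ j ∈ Finset.range μ.len, μ.parts j :=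
      Finset.sum_le_sum_of_subset (Finset.range_mono (μ.lt_len_of_parts_pos hpos))
    _ = n := μ.sum_parts

theorem exists_parts_eq {f : ℕ → ℕ} {N : ℕ} (hf : Antitone f) (hN : f N = 0)
    (hsum : ∑ j ∈ Finset.range N, f j = n) : ∃ lam : PartitionOf n, lam.parts = f := by
  have hex : ∃ k, f k = 0 := ⟨N, hN⟩
  have hzero (j : ℕ) (hj : Nat.find hex ≤ j) : f j = 0 :=
    Nat.eq_zero_of_le_zero ((hf hj).trans_eq (Nat.find_spec hex))
  refine ⟨⟨f, fun j => hf j.le_succ, Nat.find hex,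
    fun j hj => Nat.pos_of_ne_zero (Nat.find_min hex hj), hzero, ?_⟩, rfl⟩
  rw [← hsum]
  exact Finset.sum_subset (Finset.range_mono (Nat.find_min' hex hN))
    fun j _ hj => hzero j (by simpa using hj)

theorem exists_remove_boxes (μ : PartitionOf n) {S : Finset ℕ} (hS : S ⊆ Finset.range μ.len)
    (hcorner : ∀ i ∈ S, i + 1 ∉ S → μ.parts (i + 1) < μ.parts i) :
    ∃ lam : PartitionOf (n - S.card), ∀ i, lam.parts i = μ.parts i - if i ∈ S then 1 else 0 := by
  have hanti : Antitone fun i => μ.parts i - if i ∈ S then 1 else 0 := by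
    refine antitone_nat_of_succ_le fun i => ?_
    have hstep := μ.antitone i
    have hstrict := hcorner i
    split_ifs <;> grind
  have hle (i : ℕ) : (if i ∈ S then 1 else 0) ≤ μ.parts i := by
    split_ifs with hi
    · exact μ.pos_of_lt i (Finset.mem_range.mp (hS hi))
    · exact Nat.zero_le _
  have hsum : ∑ i ∈ Finset.range μ.len, (μ.parts i - if i ∈ S then 1 else 0) = n - S.card := by
    rw [Finset.sum_tsub_distrib _ fun i _ => hle i, μ.sum_parts, Finset.sum_boole, Nat.cast_id,
      Finset.filter_mem_eq_inter, Finset.inter_eq_right.mpr hS]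
  obtain ⟨lam, hlam⟩ := exists_parts_eq hanti (by simp [μ.zero_of_le μ.len le_rfl]) hsum
  exact ⟨lam, congrFun hlam⟩

theorem exists_removable_rows (μ : PartitionOf n) {m r : ℕ} (hr : r ≤ μ.len)
    (hlt : μ.parts r < m) :
    ∃ S ⊆ Finset.range μ.len, S.card = r ∧ (∀ i, m ≤ μ.parts i → i ∈ S) ∧
      ∀ i ∈ S, i + 1 ∉ S → μ.parts (i + 1) < μ.parts i := by
  have hex : ∃ i, μ.parts i < m := ⟨r, hlt⟩
  obtain ⟨t, ht, htmin⟩ : ∃ t, μ.parts t < m ∧ ∀ i < t, m ≤ μ.parts i :=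
    ⟨Nat.find hex, Nat.find_spec hex, fun i hi => not_lt.mp (Nat.find_min hex hi)⟩
  have htr : t ≤ r := not_lt.mp fun h => (htmin r h).not_gt hlt
  refine ⟨Finset.range t ∪ Finset.Ico (μ.len - (r - t)) μ.len, ?_, ?_, ?_, ?_⟩
  · intro i hi
    simp only [Finset.mem_union, Finset.mem_range, Finset.mem_Ico] at hi ⊢
    omega
  · rw [Finset.card_union_of_disjoint, Finset.card_range, Nat.card_Ico]
    · omega
    · rw [Finset.disjoint_left]
      intro i hi
      simp only [Finset.mem_range, Finset.mem_Ico] at hi ⊢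
      omega
  · intro i hi
    exact Finset.mem_union_left _
      (Finset.mem_range.mpr (μ.parts_antitone.reflect_lt (ht.trans_le hi)))
  · intro i hi hsucc
    simp only [Finset.mem_union, Finset.mem_range, Finset.mem_Ico] at hi hsucc
    obtain hend | hend : i + 1 = t ∨ i + 1 = μ.len := by omega
    · rw [hend]
      exact ht.trans_le (htmin i (by omega))
    · rw [μ.zero_of_le (i + 1) hend.ge]
      exact μ.pos_of_lt i (by omega)

theorem exists_vertical_strip_of_parts_lt (μ : PartitionOf n) {m r : ℕ} (hr : r ≤ μ.len)
    (hμ : μ.parts 0 ≤ m) (hlt : μ.parts r < m) :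
    ∃ lam : PartitionOf (n - r), lam.parts 0 ≤ m - 1 ∧
      ∀ i : ℕ, lam.parts i ≤ μ.parts i ∧ μ.parts i ≤ lam.parts i + 1 := by
  obtain ⟨S, hS, rfl, hlong, hcorner⟩ := μ.exists_removable_rows hr hlt
  obtain ⟨lam, hlam⟩ := μ.exists_remove_boxes hS hcorner
  refine ⟨lam, ?_, fun i => ?_⟩
  · rw [hlam]
    rcases hμ.lt_or_eq with hshort | hfull
    · exact (Nat.sub_le _ _).trans (Nat.le_sub_one_of_lt hshort)
    · rw [if_pos (hlong 0 hfull.ge), hfull]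
  · rw [hlam]
    split_ifs <;> omega

end PartitionOf

theorem exists_vertical_strip_pred_general (k m : ℕ) (hm : 1 ≤ m) (μ : PartitionOf (k * m))
    (hμ : μ.parts 0 ≤ m) :
    ∃ lam : PartitionOf (k * m - k), lam.parts 0 ≤ m - 1 ∧
      ∀ i : ℕ, lam.parts i ≤ μ.parts i ∧ μ.parts i ≤ lam.parts i + 1 := by
  have hlen : k ≤ μ.len :=
    Nat.le_of_mul_le_mul_right (μ.le_len_mul_parts_zero.trans (Nat.mul_le_mul_left _ hμ)) hm
  have hlt : μ.parts k < m := by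
    by_contra! hge
    have hle : (k + 1) * m ≤ k * m := (Nat.mul_le_mul_left _ hge).trans (μ.succ_mul_parts_le k)
    exact k.not_succ_le_self (Nat.le_of_mul_le_mul_right hle hm)
  exact μ.exists_vertical_strip_of_parts_lt hlen hμ hlt

/-- Every partition `μ` of `2m` dominated by `(m, m)` (i.e. with `μ₁ ≤ m`) is
obtained from a partition `λ` of `2m - 2` dominated by `(m-1, m-1)` by adding two
boxes, no two in the same row: `λ_i ≤ μ_i ≤ λ_i + 1` for all `i`. -/
theorem exists_vertical_strip_pred (m : ℕ) (hm : 1 ≤ m) (μ : PartitionOf (2 * m))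
    (hμ : μ.parts 0 ≤ m) :
    ∃ lam : PartitionOf (2 * m - 2), lam.parts 0 ≤ m - 1 ∧
      ∀ i : ℕ, lam.parts i ≤ μ.parts i ∧ μ.parts i ≤ lam.parts i + 1 :=
  exists_vertical_strip_pred_general 2 m hm μ hμ
end

section
/- Let k ≥ 0 and let μ be a partition of 2k with μ₁ ≤ k. Then there exists a sequence of partitions ∅ = λ⁰, λ¹, …, λ^k = μ such that for every 0 ≤ j ≤ k one has |λ^j| = 2j and λ^j_1 ≤ j, and for every 0 ≤ j < k the partition λ^{j+1} is obtained from λ^j by adding two boxes, no two in the same row (λ^j_i ≤ λ^{j+1}_i ≤ λ^j_i + 1 for all i). -/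
/-!
A vertical strip of size `r` is removed from a partition `μ` of `r (k + 1)` with `μ₁ ≤ k + 1` so
as to leave a partition with first part at most `k`; iterating this gives the chain from its end.
Every sequence `ν` that follows `min (μ_i, k)` on the first `s` rows and `max (μ_i - 1, 0)` on the
others is a partition differing from `μ` by a vertical strip, and its size grows by at most one when
`s` does. The sizes for `s = 0` and for `s` the number of rows of `μ` bracket `r k`, because
`x - 1 ≤ k x / (k + 1) ≤ min (x, k)` for `0 ≤ x ≤ k + 1`, so some `s` leaves exactly `r k` boxes.
-/

theorem exists_eq_of_succ_le_add_one {F : ℕ → ℕ} (hF : ∀ s, F (s + 1) ≤ F s + 1) {c N : ℕ}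
    (h₀ : F 0 ≤ c) (hN : c ≤ F N) : ∃ s, F s = c := by
  induction N with
  | zero => exact ⟨0, h₀.antisymm hN⟩
  | succ N ih =>
    rcases le_or_gt c (F N) with h | h
    · exact ih h
    · exact ⟨N + 1, ((hF N).trans h).antisymm hN⟩

section Averaging

variable {ι : Type*} {t : Finset ι} {f : ι → ℕ} {k r : ℕ}

theorem sum_sub_one_le_of_sum_eq (hf : ∀ i ∈ t, f i ≤ k + 1)
    (hsum : ∑ i ∈ t, f i = r * (k + 1)) : ∑ i ∈ t, (f i - 1) ≤ r * k := by
  have pointwise : ∀ i ∈ t, (k + 1) * (f i - 1) ≤ k * f i := fun i hi => by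
    rw [Nat.mul_sub_one, add_one_mul]
    have := hf i hi
    omega
  refine Nat.le_of_mul_le_mul_left ?_ k.succ_pos
  calc (k + 1) * ∑ i ∈ t, (f i - 1) ≤ k * ∑ i ∈ t, f i := by
        simpa only [Finset.mul_sum] using Finset.sum_le_sum pointwise
    _ = (k + 1) * (r * k) := by rw [hsum]; ring

theorem le_sum_min_of_sum_eq (hf : ∀ i ∈ t, f i ≤ k + 1)
    (hsum : ∑ i ∈ t, f i = r * (k + 1)) : r * k ≤ ∑ i ∈ t, min (f i) k := by
  have pointwise : ∀ i ∈ t, k * f i ≤ (k + 1) * min (f i) k := fun i hi => by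
    rcases le_total (f i) k with h | h
    · rw [min_eq_left h]
      exact Nat.mul_le_mul_right _ k.le_succ
    · rw [min_eq_right h, mul_comm (k + 1)]
      exact Nat.mul_le_mul_left k (hf i hi)
  refine Nat.le_of_mul_le_mul_left ?_ k.succ_pos
  calc (k + 1) * (r * k) = k * ∑ i ∈ t, f i := by rw [hsum]; ring
    _ ≤ (k + 1) * ∑ i ∈ t, min (f i) k := by
        simpa only [Finset.mul_sum] using Finset.sum_le_sum pointwise

end Averaging

/-- The skew shape `μ/ν` is a vertical strip: `μ` arises from `ν` by adding boxes, no two in the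
same row. Both shapes are given by their sequences of row lengths. -/
def IsVerticalStrip (ν μ : ℕ → ℕ) : Prop :=
  ∀ i, ν i ≤ μ i ∧ μ i ≤ ν i + 1

/-- The shape left when, in a shape `f` with rows of length at most `k + 1`, the last box is
removed from those of the first `s` rows that have length `k + 1` and from every later nonempty
row. The truncated subtraction leaves empty rows empty. -/
def removeStrip (f : ℕ → ℕ) (k s : ℕ) : ℕ → ℕ :=
  fun i => if i < s then min (f i) k else f i - 1

section RemoveStrip

variable {f : ℕ → ℕ} {k : ℕ}

theorem removeStrip_le (hf : ∀ i, f i ≤ k + 1) (s i : ℕ) : removeStrip f k s i ≤ k := by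
  have := hf i
  grind [removeStrip]

theorem antitone_removeStrip (hanti : Antitone f) (hf : ∀ i, f i ≤ k + 1) (s : ℕ) :
    Antitone (removeStrip f k s) :=
  antitone_nat_of_succ_le fun i => by
    have := hanti i.le_succ
    have := hf i
    grind [removeStrip]

theorem isVerticalStrip_removeStrip (hf : ∀ i, f i ≤ k + 1) (s : ℕ) :
    IsVerticalStrip (removeStrip f k s) f := fun i => by
  have := hf i
  grind [removeStrip]

theorem sum_removeStrip_succ_le (f : ℕ → ℕ) (k s N : ℕ) :
    ∑ i ∈ Finset.range N, removeStrip f k (s + 1) i ≤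
      ∑ i ∈ Finset.range N, removeStrip f k s i + 1 := by
  have pointwise : ∀ i,
      removeStrip f k (s + 1) i ≤ removeStrip f k s i + if s = i then 1 else 0 := by
    grind [removeStrip]
  calc ∑ i ∈ Finset.range N, removeStrip f k (s + 1) i
      ≤ ∑ i ∈ Finset.range N, (removeStrip f k s i + if s = i then 1 else 0) :=
        Finset.sum_le_sum fun i _ => pointwise i
    _ ≤ ∑ i ∈ Finset.range N, removeStrip f k s i + 1 := by
        rw [Finset.sum_add_distrib, Finset.sum_ite_eq]
        split_ifs <;> omega

theorem exists_sum_removeStrip_eq {N r : ℕ} (hf : ∀ i, f i ≤ k + 1)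
    (hsum : ∑ i ∈ Finset.range N, f i = r * (k + 1)) :
    ∃ s, ∑ i ∈ Finset.range N, removeStrip f k s i = r * k := by
  refine exists_eq_of_succ_le_add_one (N := N)
    (fun s => sum_removeStrip_succ_le f k s N) ?_ ?_
  · simpa only [removeStrip, Nat.not_lt_zero, if_false] using
      sum_sub_one_le_of_sum_eq (fun i _ => hf i) hsum
  · refine (le_sum_min_of_sum_eq (fun i _ => hf i) hsum).trans_eq ?_
    exact Finset.sum_congr rfl fun i hi => (if_pos (Finset.mem_range.mp hi)).symm

end RemoveStrip

namespace PartitionOf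

/-- The partition whose parts are the nonzero terms of a non-increasing sequence that vanishes
from the index `N` on. -/
def ofAntitone {n : ℕ} (f : ℕ → ℕ) (hf : Antitone f) (N : ℕ) (hN : f N = 0)
    (hsum : ∑ j ∈ Finset.range N, f j = n) : PartitionOf n :=
  have vanishes : ∃ m, f m = 0 := ⟨N, hN⟩
  have zero_of_find_le : ∀ j, Nat.find vanishes ≤ j → f j = 0 := fun _ hj =>
    Nat.le_zero.mp ((hf hj).trans (Nat.find_spec vanishes).le)
  { parts := f
    antitone := fun j => hf j.le_succ
    len := Nat.find vanishes
    pos_of_lt := fun _ hj => Nat.pos_of_ne_zero (Nat.find_min vanishes hj)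
    zero_of_le := zero_of_find_le
    sum_parts := by
      rw [← hsum]
      refine Finset.sum_subset (Finset.range_mono (Nat.find_min' vanishes hN)) fun j _ hj => ?_
      exact zero_of_find_le j (by simpa only [Finset.mem_range, not_lt] using hj) }

instance (n : ℕ) : Inhabited (PartitionOf n) where
  default := ofAntitone (fun j => if j = 0 then n else 0)
    (antitone_nat_of_succ_le fun _ => Nat.zero_le _) 1 rfl (Finset.sum_range_one _)

theorem antitone_parts {n : ℕ} (μ : PartitionOf n) : Antitone μ.parts :=
  antitone_nat_of_succ_le μ.antitone

theorem parts_eq_zero (μ : PartitionOf 0) (i : ℕ) : μ.parts i = 0 := by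
  rcases lt_or_ge i μ.len with hi | hi
  · exact Finset.sum_eq_zero_iff.mp μ.sum_parts i (Finset.mem_range.mpr hi)
  · exact μ.zero_of_le i hi

theorem exists_parts_zero_le_and_isVerticalStrip {r k : ℕ} (μ : PartitionOf (r * (k + 1)))
    (hμ : μ.parts 0 ≤ k + 1) :
    ∃ ν : PartitionOf (r * k), ν.parts 0 ≤ k ∧ IsVerticalStrip ν.parts μ.parts := by
  have hle : ∀ i, μ.parts i ≤ k + 1 := fun i => (μ.antitone_parts i.zero_le).trans hμ
  obtain ⟨s, hs⟩ := exists_sum_removeStrip_eq hle μ.sum_parts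
  have hzero : removeStrip μ.parts k s μ.len = 0 := by
    simp [removeStrip, μ.zero_of_le μ.len le_rfl]
  exact ⟨ofAntitone _ (antitone_removeStrip μ.antitone_parts hle s) μ.len hzero hs,
    removeStrip_le hle s 0, isVerticalStrip_removeStrip hle s⟩

end PartitionOf

theorem exists_vertical_strip_chain_general (r k : ℕ) (μ : PartitionOf (r * k))
    (hμ : μ.parts 0 ≤ k) :
    ∃ lam : (j : ℕ) → PartitionOf (r * j),
      (∀ i : ℕ, (lam 0).parts i = 0) ∧
      (lam k).parts = μ.parts ∧
      (∀ j : ℕ, j ≤ k → (lam j).parts 0 ≤ j) ∧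
      ∀ j : ℕ, j < k → IsVerticalStrip (lam j).parts (lam (j + 1)).parts := by
  induction k with
  | zero =>
    -- The terms of `lam` beyond the end of the chain are arbitrary.
    refine ⟨fun _ => default, PartitionOf.parts_eq_zero _, ?_, fun j hj => ?_, by simp⟩
    · exact funext fun i => by rw [PartitionOf.parts_eq_zero, PartitionOf.parts_eq_zero μ]
    · obtain rfl := Nat.le_zero.mp hj
      exact (PartitionOf.parts_eq_zero _ 0).le
  | succ k ih =>
    obtain ⟨ν, hν, hstrip⟩ := μ.exists_parts_zero_le_and_isVerticalStrip hμ
    obtain ⟨lam, hzero, hlast, hfirst, hstep⟩ := ih ν hν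
    have hold : ∀ j ≤ k, Function.update lam (k + 1) μ j = lam j := fun j hj =>
      Function.update_of_ne (by omega) _ _
    refine ⟨Function.update lam (k + 1) μ, ?_, by rw [Function.update_self], fun j hj => ?_,
      fun j hj => ?_⟩
    · rwa [hold 0 k.zero_le]
    · rcases Nat.le_succ_iff.mp hj with h | rfl
      · rw [hold j h]
        exact hfirst j h
      · rwa [Function.update_self]
    · rw [hold j (Nat.lt_succ_iff.mp hj)]
      rcases Nat.lt_succ_iff_lt_or_eq.mp hj with h | rfl
      · rw [hold (j + 1) h]
        exact hstep j h
      · rwa [Function.update_self, hlast]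

/-- For every partition `μ` of `2k` with `μ₁ ≤ k` there is a chain
`∅ = λ⁰, λ¹, …, λ^k = μ` of partitions with `|λ^j| = 2j` and `λ^j₁ ≤ j`, each
obtained from the previous one by adding two boxes, no two in the same row. -/
theorem exists_vertical_strip_chain (k : ℕ) (μ : PartitionOf (2 * k))
    (hμ : μ.parts 0 ≤ k) :
    ∃ lam : (j : ℕ) → PartitionOf (2 * j),
      (∀ i : ℕ, (lam 0).parts i = 0) ∧
      (lam k).parts = μ.parts ∧
      (∀ j : ℕ, j ≤ k → (lam j).parts 0 ≤ j) ∧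
      ∀ j : ℕ, j < k → ∀ i : ℕ,
        (lam j).parts i ≤ (lam (j + 1)).parts i ∧
        (lam (j + 1)).parts i ≤ (lam j).parts i + 1 :=
  exists_vertical_strip_chain_general 2 k μ hμ
end
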